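/- arXiv:2011.11361 — 2 statements merged into one kernel-verified Lean document; each statement's English description precedes it below -/
import Mathlib

section
/- Let V be a countable set; let c : V × V → ℝ be symmetric (c(x,y) = c(y,x)) and nonnegative with c(x,x) = 0 for all x; write c_x := Σ_{y∈V} c(x,y). Let u : V → ℝ satisfy Σ_{x∈V} |u(x)| < ∞ and Σ_{x∈V} c_x |u(x)| < ∞. For η : V → {0,1} define F(η) := Σ_{x∈V} u(x) η(x). Then for every η : V → {0,1}: (a) the family (c(x,y)·[F(η^{x,y}) − F(η)])_{(x,y)∈V×V} is absolutely summable, with Σ_{(x,y)} c(x,y)|F(η^{x,y}) − F(η)| ≤ 2 Σ_x c_x |u(x)|; (b) the duality identity (1/2) Σ_{(x,y)∈V×V} c(x,y)[F(η^{x,y}) − F(η)] = Σ_{x∈V} η(x) Σ_{y∈V} c(x,y)(u(y) − u(x)) holds, all inner series being absolutely convergent. -/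
/-!
Exchanging the values at `x` and `y` changes `F(η) = ∑ u z η z` in at most two terms, which gives
`F(η^{x,y}) - F(η) = (u y - u x) (η x - η y)` (`linF_exch_sub`). Since `|η x - η y| ≤ 1`, the family
in question is dominated by `c x y |u x| + c x y |u y|`. Both halves have sum `∑ c_x |u x|`: the
first by Tonelli (`summable_weight`), the second by the symmetry of `c`. For the identity, put
`g (x, y) = η x * (c x y * (u y - u x))`, which is absolutely summable by the same domination. By
symmetry of `c` the generator term at `(x, y)` is `g (x, y) + g (y, x)`, so its sum is `2 ∑ g`, and
Fubini rewrites `∑ g` as the iterated sum.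
-/

/-- The configuration obtained from `η` by exchanging the occupation values at `x` and `y`. -/
def exch {V : Type*} [DecidableEq V] (η : V → ℝ) (x y : V) : V → ℝ :=
  fun z => if z = x then η y else if z = y then η x else η z

/-- The linear functional `F(η) = Σ_x u(x) η(x)`. -/
noncomputable def linF {V : Type*} (u η : V → ℝ) : ℝ := ∑' z, u z * η z

theorem linF_exch_sub {V : Type*} [DecidableEq V] {u η : V → ℝ}
    (huη : Summable fun z => u z * η z) (x y : V) :
    linF u (exch η x y) - linF u η = (u y - u x) * (η x - η y) := by
  have h : HasSum (fun z => u z * exch η x y z)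
      ((∑' z, u z * η z) + u x * (η y - η x) + u y * (η x - η y)) := by
    refine ((huη.hasSum.add (hasSum_ite_eq x (u x * (η y - η x)))).add
      (hasSum_ite_eq y (u y * (η x - η y)))).congr_fun ?_
    intro z
    -- The formula also holds for `x = y`, where both corrections vanish.
    unfold exch
    by_cases hx : z = x <;> by_cases hy : z = y <;> simp only [hx, hy, if_true, if_false] <;> grind
  unfold linF
  rw [h.tsum_eq]
  ring

theorem summable_weight {V : Type*} {c : V → V → ℝ} (hnonneg : ∀ x y, 0 ≤ c x y)
    (hrow : ∀ x, Summable fun y => c x y) {u : V → ℝ}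
    (hcu : Summable fun x => (∑' y, c x y) * |u x|) :
    Summable fun p : V × V => c p.1 p.2 * |u p.1| := by
  have h0 : 0 ≤ fun p : V × V => c p.1 p.2 * |u p.1| :=
    fun p => mul_nonneg (hnonneg p.1 p.2) (abs_nonneg (u p.1))
  have h1 : ∀ x, Summable fun y => c x y * |u x| := fun x => (hrow x).mul_right |u x|
  have h2 : Summable fun x => ∑' y, c x y * |u x| := by
    simpa only [tsum_mul_right] using hcu
  exact (summable_prod_of_nonneg h0).2 ⟨h1, h2⟩

/-- Duality identity: the exchange (simple exclusion) generator applied to the linear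
functional `F(η) = Σ u(x)η(x)` equals `Σ_x η(x) Σ_y c(x,y)(u(y)-u(x))`, all series being
absolutely convergent. -/
theorem stmt3 {V : Type*} [Countable V] [DecidableEq V]
    (c : V → V → ℝ) (hsym : ∀ x y, c x y = c y x) (hnonneg : ∀ x y, 0 ≤ c x y)
    (hdiag : ∀ x, c x x = 0)
    (hrow : ∀ x, Summable fun y => c x y)
    (u : V → ℝ) (hu : Summable fun x => |u x|)
    (hcu : Summable fun x => (∑' y, c x y) * |u x|)
    (η : V → ℝ) (hη : ∀ z, η z = 0 ∨ η z = 1) :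
    (Summable fun p : V × V =>
        c p.1 p.2 * |linF u (exch η p.1 p.2) - linF u η|) ∧
    ((∑' p : V × V, c p.1 p.2 * |linF u (exch η p.1 p.2) - linF u η|)
        ≤ 2 * ∑' x, (∑' y, c x y) * |u x|) ∧
    (∀ x, Summable fun y => c x y * (u y - u x)) ∧
    (Summable fun x : V => η x * ∑' y, c x y * (u y - u x)) ∧
    ((1 / 2) * (∑' p : V × V, c p.1 p.2 * (linF u (exch η p.1 p.2) - linF u η))
        = ∑' x, η x * ∑' y, c x y * (u y - u x)) := by
  have hη1 : ∀ z, |η z| ≤ 1 := fun z => by rcases hη z with h | h <;> simp [h]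
  have hη2 : ∀ x y, |η x - η y| ≤ 1 := fun x y => by
    rcases hη x with h | h <;> rcases hη y with h' | h' <;> simp [h, h']
  have huη : Summable fun z => u z * η z := by
    refine Summable.of_norm_bounded hu fun z => ?_
    rw [Real.norm_eq_abs, abs_mul]
    exact mul_le_of_le_one_right (abs_nonneg _) (hη1 z)
  simp only [linF_exch_sub huη]
  have hA : Summable fun p : V × V => c p.1 p.2 * |u p.1| := summable_weight hnonneg hrow hcu
  have hAsum : ∑' p : V × V, c p.1 p.2 * |u p.1| = ∑' x, (∑' y, c x y) * |u x| := by
    rw [hA.tsum_prod]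
    simp only [tsum_mul_right]
  have hswap : (fun p : V × V => c p.1 p.2 * |u p.2|)
      = (fun p : V × V => c p.1 p.2 * |u p.1|) ∘ Equiv.prodComm V V := by
    funext p
    simp [hsym p.2 p.1]
  have hB : Summable fun p : V × V => c p.1 p.2 * |u p.2| := by
    rw [hswap]
    exact (Equiv.prodComm V V).summable_iff.2 hA
  have hBsum : ∑' p : V × V, c p.1 p.2 * |u p.2| = ∑' x, (∑' y, c x y) * |u x| := by
    rw [hswap, ← hAsum]
    exact (Equiv.prodComm V V).tsum_eq fun p : V × V => c p.1 p.2 * |u p.1|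
  have habs : ∀ x y, c x y * |u y - u x| ≤ c x y * |u x| + c x y * |u y| := fun x y => by
    rw [← mul_add, add_comm]
    exact mul_le_mul_of_nonneg_left (abs_sub _ _) (hnonneg x y)
  have hbound : ∀ p : V × V, c p.1 p.2 * |(u p.2 - u p.1) * (η p.1 - η p.2)|
      ≤ c p.1 p.2 * |u p.1| + c p.1 p.2 * |u p.2| := fun p => by
    refine le_trans (mul_le_mul_of_nonneg_left ?_ (hnonneg _ _)) (habs p.1 p.2)
    rw [abs_mul]
    exact mul_le_of_le_one_right (abs_nonneg _) (hη2 _ _)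
  have hmain : Summable fun p : V × V => c p.1 p.2 * |(u p.2 - u p.1) * (η p.1 - η p.2)| :=
    Summable.of_nonneg_of_le (fun p => mul_nonneg (hnonneg _ _) (abs_nonneg _)) hbound (hA.add hB)
  have hD : Summable fun p : V × V => c p.1 p.2 * (u p.2 - u p.1) := by
    refine Summable.of_norm_bounded (hA.add hB) fun p => ?_
    rw [Real.norm_eq_abs, abs_mul, abs_of_nonneg (hnonneg _ _)]
    exact habs _ _
  have hg : Summable fun p : V × V => η p.1 * (c p.1 p.2 * (u p.2 - u p.1)) := by
    refine Summable.of_norm_bounded hD.norm fun p => ?_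
    rw [norm_mul]
    exact mul_le_of_le_one_left (norm_nonneg _) (hη1 _)
  refine ⟨hmain, ?_, fun x => hD.prod_factor x, ?_, ?_⟩
  · calc _ ≤ ∑' p : V × V, (c p.1 p.2 * |u p.1| + c p.1 p.2 * |u p.2|) :=
          hmain.tsum_le_tsum hbound (hA.add hB)
      _ = _ := by rw [hA.tsum_add hB, hAsum, hBsum, two_mul]
  · simpa only [tsum_mul_left] using hg.prod
  · have hsplit : ∀ p : V × V, c p.1 p.2 * ((u p.2 - u p.1) * (η p.1 - η p.2))
        = η p.1 * (c p.1 p.2 * (u p.2 - u p.1))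
          + η p.2 * (c p.2 p.1 * (u p.1 - u p.2)) := fun p => by
      rw [hsym p.2 p.1]
      ring
    have hg' : Summable fun p : V × V => η p.2 * (c p.2 p.1 * (u p.1 - u p.2)) :=
      (Equiv.prodComm V V).summable_iff.2 hg
    have hgsum : ∑' p : V × V, η p.2 * (c p.2 p.1 * (u p.1 - u p.2))
        = ∑' p : V × V, η p.1 * (c p.1 p.2 * (u p.2 - u p.1)) :=
      (Equiv.prodComm V V).tsum_eq fun p : V × V => η p.1 * (c p.1 p.2 * (u p.2 - u p.1))
    rw [tsum_congr hsplit, hg.tsum_add hg', hgsum, hg.tsum_prod]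
    simp only [tsum_mul_left]
    ring
end

section
/- Let (Ω, F, P) be a probability space and let (θ_g)_{g∈ℤ^d} be measurable maps Ω → Ω with θ_0 = id and θ_g ∘ θ_{g'} = θ_{g+g'}, each θ_g preserving P, and with the action ergodic: every measurable A ⊆ Ω with θ_g^{-1}A = A for all g ∈ ℤ^d has P(A) ∈ {0,1}. Let ω ↦ ω̂ ∈ (subsets of ℤ^d) be such that {ω : x ∈ ω̂} is measurable for every x ∈ ℤ^d, and suppose that for P-a.e. ω and all g ∈ ℤ^d one has (θ_g ω)^ = ω̂ − g. Assume m := P(0 ∈ ω̂) > 0. Let f : Ω → ℝ be measurable with ∫_{{0 ∈ ω̂}} |f| dP < ∞. Then there exists a measurable set A[f] ⊆ Ω with P(A[f]) = 1 and θ_g A[f] = A[f] for all g ∈ ℤ^d, such that for every ω ∈ A[f] and every continuous compactly supported φ : ℝ^d → ℝ, lim_{ε→0⁺} ε^d Σ_{x ∈ ω̂} φ(ε x) f(θ_x ω) = (∫_{ℝ^d} φ(x) dx) · ∫_{{0 ∈ ω̂}} f dP. (For each ε > 0 the sum has finitely many nonzero terms since φ has compact support.) -/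
open MeasureTheory Filter

/-!
Put `h = 1_{0 ∈ ω̂} f`. By covariance, almost surely `x ∈ ω̂` if and only if `0 ∈ (θ_x ω)^` for all
`x`, so the sum in question is `ε^d Σ_x φ(εx) h(θ_x ω)` over the whole lattice, and the claim is a
pointwise ergodic theorem for the action, with weights `φ(εx)`, valid simultaneously for all `φ`.

* The class of `h` for which it holds (`PalmErgodic.Good`) is closed in `L¹`
  (`PalmErgodic.good_of_approx`): the rescaled sums are bounded by the maximal function over cubes,
  uniformly in `ε`, and the maximal function satisfies a weak-type `(1,1)` inequality
  (`PalmErgodic.measureReal_exceed_le`), obtained by transference from the Vitali covering lemma on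
  the lattice.
* It contains the constants, by convergence of Riemann sums (`PalmErgodic.tendsto_scaledSum_one`),
  and the coboundaries `b - b ∘ θ_g`, by summation by parts and uniform continuity of `φ`
  (`PalmErgodic.tendsto_scaledSum_coboundary`).
* In `L²` a function orthogonal to all coboundaries is invariant, hence constant, so constants and
  coboundaries span a dense subspace (`PalmErgodic.goodSubmodule_eq_top`); `L²` is dense in `L¹`.

The resulting event of full measure is made strictly invariant by intersecting its countably many
translates.
-/

namespace PalmErgodic

/-! ### Cubes in the lattice and the covering argument -/

/-- The lattice cube of centre `y` and radius `n`, i.e. the closed sup-norm ball. -/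
noncomputable def cube {d : ℕ} (y : Fin d → ℤ) (n : ℕ) : Finset (Fin d → ℤ) :=
  Finset.Icc (fun i => y i - n) (fun i => y i + n)

lemma mem_cube {d : ℕ} {x y : Fin d → ℤ} {n : ℕ} :
    x ∈ cube y n ↔ ∀ i, |x i - y i| ≤ n := by
  simp only [cube, Finset.mem_Icc, Pi.le_def, abs_le]
  constructor
  · rintro ⟨h1, h2⟩ i
    have := h1 i
    have := h2 i
    constructor <;> linarith
  · intro h
    constructor <;> intro i <;> have := h i <;> linarith [this.1, this.2]

lemma card_cube {d : ℕ} (y : Fin d → ℤ) (n : ℕ) : (cube y n).card = (2 * n + 1) ^ d := by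
  rw [cube, Pi.card_Icc]
  have : ∀ i : Fin d, (Finset.Icc (y i - n) (y i + n)).card = 2 * n + 1 := by
    intro i
    rw [Int.card_Icc]
    omega
  simp [this]

lemma mem_closedBall_iff {d : ℕ} {x y : Fin d → ℤ} {n : ℕ} :
    x ∈ Metric.closedBall y (n : ℝ) ↔ x ∈ cube y n := by
  rw [mem_cube, Metric.mem_closedBall, dist_pi_le_iff (by positivity)]
  refine forall_congr' fun i => ?_
  rw [Int.dist_eq]
  exact_mod_cast Iff.rfl

lemma sum_cube_shift {d : ℕ} (v : (Fin d → ℤ) → ℝ) (y : Fin d → ℤ) (n : ℕ) :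
    ∑ x ∈ cube 0 n, v (x + y) = ∑ x ∈ cube y n, v x := by
  refine Finset.sum_bij (fun x _ => x + y) ?_ ?_ ?_ ?_
  · intro x hx
    rw [mem_cube] at hx ⊢
    simpa using hx
  · intro a _ b _ h
    exact add_right_cancel h
  · intro b hb
    refine ⟨b - y, ?_, by simp⟩
    rw [mem_cube] at hb ⊢
    simpa using hb
  · intro x _
    rfl

open Classical in
/-- Discrete Hardy–Littlewood estimate: the points of a cube around which some average of `v`
exceeds `l` are covered, by the Vitali covering lemma, by fivefold enlargements of disjoint cubes
on which the average exceeds `l`. -/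
lemma maximal_deterministic {d : ℕ} (v : (Fin d → ℤ) → ℝ) (hv : ∀ x, 0 ≤ v x) {l : ℝ}
    (hl : 0 < l) (K : ℕ) :
    l * (((cube 0 K).filter fun y =>
      ∃ n ≤ K, l * ((2 * n + 1 : ℕ) : ℝ) ^ d < ∑ x ∈ cube 0 n, v (x + y)).card : ℝ) ≤
      5 ^ d * ∑ x ∈ cube (0 : Fin d → ℤ) (2 * K), v x := by
  set S := (cube (0 : Fin d → ℤ) K).filter fun y =>
      ∃ n ≤ K, l * ((2 * n + 1 : ℕ) : ℝ) ^ d < ∑ x ∈ cube 0 n, v (x + y) with hS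
  have hex : ∀ y : Fin d → ℤ, ∃ n : ℕ, y ∈ S →
      n ≤ K ∧ l * ((2 * n + 1 : ℕ) : ℝ) ^ d < ∑ x ∈ cube y n, v x := by
    intro y
    by_cases hy : y ∈ S
    · obtain ⟨n, hn, h⟩ := (Finset.mem_filter.1 hy).2
      exact ⟨n, fun _ => ⟨hn, by rwa [sum_cube_shift] at h⟩⟩
    · exact ⟨0, fun h => absurd h hy⟩
  choose r hr using hex
  obtain ⟨u, huS, hdisj, hcov⟩ :=
    Vitali.exists_disjoint_subfamily_covering_enlargement_closedBall (S : Set (Fin d → ℤ))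
      (fun y => y) (fun y => (r y : ℝ)) K (fun a ha => by exact_mod_cast (hr a ha).1) 5
      (by norm_num)
  set U := S.filter (· ∈ u) with hU
  have hUS : ∀ y ∈ U, y ∈ S := fun y hy => (Finset.mem_filter.1 hy).1
  have hsub : S ⊆ U.biUnion fun y => cube y (5 * r y) := by
    intro a ha
    obtain ⟨b, hb, hab⟩ := hcov a ha
    refine Finset.mem_biUnion.2 ⟨b, Finset.mem_filter.2 ⟨huS hb, hb⟩, ?_⟩
    rw [← mem_closedBall_iff]
    have := hab (Metric.mem_closedBall_self (by positivity))
    push_cast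
    exact this
  have hpd : (U : Set (Fin d → ℤ)).PairwiseDisjoint fun y => cube y (r y) := by
    intro a ha b hb hab
    have h := hdisj (Finset.mem_filter.1 ha).2 (Finset.mem_filter.1 hb).2 hab
    refine Finset.disjoint_left.2 fun x hx hx' => ?_
    exact Set.disjoint_left.1 h (mem_closedBall_iff.2 hx) (mem_closedBall_iff.2 hx')
  have hcard : (S.card : ℝ) ≤ ∑ y ∈ U, 5 ^ d * ((2 * r y + 1 : ℕ) : ℝ) ^ d := by
    have h1 : S.card ≤ ∑ y ∈ U, (cube y (5 * r y)).card :=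
      (Finset.card_le_card hsub).trans Finset.card_biUnion_le
    calc (S.card : ℝ) ≤ ((∑ y ∈ U, (cube y (5 * r y)).card : ℕ) : ℝ) := by exact_mod_cast h1
      _ = ∑ y ∈ U, ((2 * (5 * r y) + 1 : ℕ) : ℝ) ^ d := by
          push_cast [card_cube]
          rfl
      _ ≤ _ := by
          refine Finset.sum_le_sum fun y _ => ?_
          rw [← mul_pow]
          refine pow_le_pow_left₀ (by positivity) ?_ _
          push_cast
          linarith
  calc l * (S.card : ℝ) ≤ l * ∑ y ∈ U, 5 ^ d * ((2 * r y + 1 : ℕ) : ℝ) ^ d := by gcongr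
    _ = 5 ^ d * ∑ y ∈ U, l * ((2 * r y + 1 : ℕ) : ℝ) ^ d := by
        simp only [Finset.mul_sum]
        refine Finset.sum_congr rfl fun y _ => by ring
    _ ≤ 5 ^ d * ∑ y ∈ U, ∑ x ∈ cube y (r y), v x := by
        gcongr with y hy
        exact (hr y (hUS y hy)).2.le
    _ = 5 ^ d * ∑ x ∈ U.biUnion fun y => cube y (r y), v x := by
        rw [Finset.sum_biUnion hpd]
    _ ≤ 5 ^ d * ∑ x ∈ cube (0 : Fin d → ℤ) (2 * K), v x := by
        refine mul_le_mul_of_nonneg_left ?_ (by positivity)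
        refine Finset.sum_le_sum_of_subset_of_nonneg ?_ fun x _ _ => hv x
        intro x hx
        obtain ⟨y, hy, hxy⟩ := Finset.mem_biUnion.1 hx
        have hyK := (Finset.mem_filter.1 (hUS y hy)).1
        have hrK := (hr y (hUS y hy)).1
        rw [mem_cube] at hxy hyK ⊢
        intro i
        have h1 := abs_le.1 (hxy i)
        have h2 := abs_le.1 (hyK i)
        rw [abs_le]
        simp only [Pi.zero_apply] at h2 ⊢
        push_cast
        constructor <;> omega

/-! ### The weak-type maximal inequality -/

/-- The points at which some average of `|u|` along the orbit over a cube of radius at most `K`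
exceeds `l`. -/
def exceedUpTo {d : ℕ} {Ω : Type*} (θ : (Fin d → ℤ) → Ω → Ω) (u : Ω → ℝ) (l : ℝ) (K : ℕ) :
    Set Ω :=
  {ω | ∃ n ≤ K, l * ((2 * n + 1 : ℕ) : ℝ) ^ d < ∑ x ∈ cube 0 n, |u (θ x ω)|}

/-- The points at which the maximal function of `u` along the orbit exceeds `l`. -/
def exceed {d : ℕ} {Ω : Type*} (θ : (Fin d → ℤ) → Ω → Ω) (u : Ω → ℝ) (l : ℝ) : Set Ω :=
  {ω | ∃ n : ℕ, l * ((2 * n + 1 : ℕ) : ℝ) ^ d < ∑ x ∈ cube 0 n, |u (θ x ω)|}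

lemma measurableSet_exceedUpTo {d : ℕ} {Ω : Type*} [MeasurableSpace Ω]
    {θ : (Fin d → ℤ) → Ω → Ω} (hθ : ∀ g, Measurable (θ g)) {u : Ω → ℝ} (hu : Measurable u)
    (l : ℝ) (K : ℕ) : MeasurableSet (exceedUpTo θ u l K) := by
  have : exceedUpTo θ u l K = ⋃ n : ℕ, ⋃ _ : n ≤ K,
      {ω | l * ((2 * n + 1 : ℕ) : ℝ) ^ d < ∑ x ∈ cube 0 n, |u (θ x ω)|} := by
    ext ω
    simp [exceedUpTo]
  rw [this]
  refine MeasurableSet.iUnion fun n => MeasurableSet.iUnion fun _ => ?_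
  refine measurableSet_lt measurable_const ?_
  exact Finset.measurable_sum _ fun x _ => (hu.comp (hθ x)).abs

/-- Transference of the discrete estimate to `Ω`: integrate it along orbits over a cube of
radius `K`. -/
lemma measureReal_exceedUpTo_le {d : ℕ} {Ω : Type*} [MeasurableSpace Ω] (P : Measure Ω)
    [IsProbabilityMeasure P] (θ : (Fin d → ℤ) → Ω → Ω)
    (hmp : ∀ g, MeasurePreserving (θ g) P P)
    (hcomp : ∀ g g', θ g ∘ θ g' = θ (g + g')) {u : Ω → ℝ} (hu : Measurable u)
    (hui : Integrable u P) {l : ℝ} (hl : 0 < l) (K : ℕ) :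
    l * P.real (exceedUpTo θ u l K) ≤ 10 ^ d * ∫ ω, |u ω| ∂P := by
  classical
  have hE := measurableSet_exceedUpTo (fun g => (hmp g).measurable) hu l K
  set E := exceedUpTo θ u l K with hEdef
  have hpt : ∀ ω, l * ∑ y ∈ cube (0 : Fin d → ℤ) K, (θ y ⁻¹' E).indicator (fun _ => (1 : ℝ)) ω ≤
      5 ^ d * ∑ x ∈ cube (0 : Fin d → ℤ) (2 * K), |u (θ x ω)| := by
    intro ω
    refine le_trans (le_of_eq ?_)
      (maximal_deterministic (fun x => |u (θ x ω)|) (fun _ => abs_nonneg _) hl K)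
    congr 1
    rw [Finset.card_filter]
    push_cast
    refine Finset.sum_congr rfl fun y _ => ?_
    simp only [Set.indicator_apply]
    refine if_congr ?_ rfl rfl
    simp only [hEdef, exceedUpTo, Set.mem_preimage, Set.mem_ofPred_eq]
    simp only [← hcomp, Function.comp_apply]
    push_cast
    rfl
  have hint : ∀ x, Integrable (fun ω => |u (θ x ω)|) P := fun x =>
    ((hmp x).integrable_comp_of_integrable hui).abs
  have hind : ∀ y, Integrable ((θ y ⁻¹' E).indicator (fun _ => (1 : ℝ))) P := fun y =>
    (integrable_const _).indicator ((hmp y).measurable hE)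
  have hI := integral_mono ((integrable_finsetSum (cube (0 : Fin d → ℤ) K)
    fun y _ => hind y).const_mul l)
    ((integrable_finsetSum (cube (0 : Fin d → ℤ) (2 * K)) fun x _ => hint x).const_mul (5 ^ d))
    hpt
  rw [integral_const_mul, integral_const_mul, integral_finsetSum _ fun y _ => hind y,
    integral_finsetSum _ fun x _ => hint x] at hI
  have e1 : ∀ y, ∫ ω, (θ y ⁻¹' E).indicator (fun _ => (1 : ℝ)) ω ∂P = P.real E := by
    intro y
    rw [integral_indicator_const _ ((hmp y).measurable hE), smul_eq_mul, mul_one,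
      measureReal_def, (hmp y).measure_preimage hE.nullMeasurableSet, measureReal_def]
  have e2 : ∀ x, ∫ ω, |u (θ x ω)| ∂P = ∫ ω, |u ω| ∂P := by
    intro x
    have := integral_map (μ := P) (hmp x).measurable.aemeasurable
      (f := fun ω => |u ω|) hu.abs.aestronglyMeasurable
    rw [(hmp x).map_eq] at this
    exact this.symm
  simp only [e1, e2, Finset.sum_const, card_cube, nsmul_eq_mul] at hI
  have hI0 : 0 ≤ ∫ ω, |u ω| ∂P := integral_nonneg fun _ => abs_nonneg _
  have hpos : (0 : ℝ) < (((2 * K + 1) ^ d : ℕ) : ℝ) := by positivity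
  have hgrow : (((2 * (2 * K) + 1) ^ d : ℕ) : ℝ) ≤ 2 ^ d * (((2 * K + 1) ^ d : ℕ) : ℝ) := by
    push_cast
    rw [← mul_pow]
    exact pow_le_pow_left₀ (by positivity) (by linarith) _
  refine le_of_mul_le_mul_left ?_ hpos
  calc (((2 * K + 1) ^ d : ℕ) : ℝ) * (l * P.real E)
      = l * ((((2 * K + 1) ^ d : ℕ) : ℝ) * P.real E) := by ring
    _ ≤ 5 ^ d * ((((2 * (2 * K) + 1) ^ d : ℕ) : ℝ) * ∫ ω, |u ω| ∂P) := hI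
    _ ≤ 5 ^ d * ((2 ^ d * (((2 * K + 1) ^ d : ℕ) : ℝ)) * ∫ ω, |u ω| ∂P) := by gcongr
    _ = (((2 * K + 1) ^ d : ℕ) : ℝ) * (10 ^ d * ∫ ω, |u ω| ∂P) := by
        rw [show (10 : ℝ) = 5 * 2 by norm_num, mul_pow]
        ring

/-- Weak-type `(1,1)` maximal inequality for the action. -/
lemma measureReal_exceed_le {d : ℕ} {Ω : Type*} [MeasurableSpace Ω] (P : Measure Ω)
    [IsProbabilityMeasure P] (θ : (Fin d → ℤ) → Ω → Ω)
    (hmp : ∀ g, MeasurePreserving (θ g) P P)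
    (hcomp : ∀ g g', θ g ∘ θ g' = θ (g + g')) {u : Ω → ℝ} (hu : Measurable u)
    (hui : Integrable u P) {l : ℝ} (hl : 0 < l) :
    l * P.real (exceed θ u l) ≤ 10 ^ d * ∫ ω, |u ω| ∂P := by
  have hUn : exceed θ u l = ⋃ K, exceedUpTo θ u l K := by
    ext ω
    simp only [exceed, exceedUpTo, Set.mem_ofPred_eq, Set.mem_iUnion]
    exact ⟨fun ⟨n, h⟩ => ⟨n, n, le_rfl, h⟩, fun ⟨_, n, _, h⟩ => ⟨n, h⟩⟩
  have hmono : Monotone (exceedUpTo θ u l) := by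
    rintro K L hKL ω ⟨n, hn, h⟩
    exact ⟨n, hn.trans hKL, h⟩
  have ht := tendsto_measure_iUnion_atTop (μ := P) hmono
  rw [← hUn] at ht
  have ht' := (ENNReal.tendsto_toReal (measure_ne_top P _)).comp ht
  exact le_of_tendsto (ht'.const_mul l)
    (Eventually.of_forall fun K => measureReal_exceedUpTo_le P θ hmp hcomp hu hui hl K)

/-! ### Weighted lattice sums -/

/-- The rescaled sum `ε^d Σ_x ψ(εx) u(x)` over the lattice. -/
noncomputable def scaledSum {d : ℕ} (ψ : (Fin d → ℝ) → ℝ) (ε : ℝ) (u : (Fin d → ℤ) → ℝ) : ℝ :=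
  ε ^ d * ∑' x : Fin d → ℤ, ψ (fun i => ε * (x i : ℝ)) * u x

lemma support_subset_cube {d : ℕ} {R ε : ℝ} (hε : 0 < ε) {D : (Fin d → ℤ) → ℝ}
    (hD : ∀ x, D x ≠ 0 → ∀ i, |ε * (x i : ℝ)| ≤ R) :
    ∀ x, x ∉ cube (0 : Fin d → ℤ) ⌈R / ε⌉₊ → D x = 0 := by
  intro x hx
  by_contra h
  refine hx (mem_cube.2 fun i => ?_)
  have h1 := hD x h i
  rw [abs_mul, abs_of_pos hε, mul_comm, ← le_div_iff₀ hε] at h1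
  have h2 : |(x i : ℝ)| ≤ (⌈R / ε⌉₊ : ℝ) := h1.trans (Nat.le_ceil _)
  simp only [Pi.zero_apply, sub_zero]
  exact_mod_cast h2

lemma scaled_card_le {d : ℕ} {R ε : ℝ} (hR : 0 ≤ R) (hε : 0 < ε) (hε1 : ε ≤ 1) :
    ε ^ d * ((2 * ⌈R / ε⌉₊ + 1 : ℕ) : ℝ) ^ d ≤ (2 * R + 3) ^ d := by
  rw [← mul_pow]
  refine pow_le_pow_left₀ (by positivity) ?_ _
  have h := (Nat.ceil_lt_add_one (div_nonneg hR hε.le)).le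
  push_cast
  calc ε * (2 * (⌈R / ε⌉₊ : ℝ) + 1) ≤ ε * (2 * (R / ε + 1) + 1) := by gcongr
    _ = 2 * R + 3 * ε := by field_simp; ring
    _ ≤ _ := by linarith

/-- A rescaled sum supported in the cube of radius `R/ε` is controlled by the averages of a
majorant over cubes. -/
lemma abs_scaled_tsum_le {d : ℕ} {R ε η l : ℝ} (hR : 0 ≤ R) (hε : 0 < ε) (hε1 : ε ≤ 1)
    (hη : 0 ≤ η) (hl : 0 ≤ l) {D u : (Fin d → ℤ) → ℝ}
    (hD : ∀ x, D x ≠ 0 → ∀ i, |ε * (x i : ℝ)| ≤ R) (hDu : ∀ x, |D x| ≤ η * |u x|)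
    (hu : ∀ n : ℕ, ∑ x ∈ cube 0 n, |u x| ≤ l * ((2 * n + 1 : ℕ) : ℝ) ^ d) :
    |ε ^ d * ∑' x, D x| ≤ (2 * R + 3) ^ d * (η * l) := by
  rw [tsum_eq_sum (s := cube 0 ⌈R / ε⌉₊) fun x hx => support_subset_cube hε hD x hx,
    abs_mul, abs_of_pos (pow_pos hε d)]
  calc ε ^ d * |∑ x ∈ cube 0 ⌈R / ε⌉₊, D x|
      ≤ ε ^ d * ∑ x ∈ cube 0 ⌈R / ε⌉₊, η * |u x| := by
        gcongr
        exact (Finset.abs_sum_le_sum_abs _ _).trans (Finset.sum_le_sum fun x _ => hDu x)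
    _ ≤ ε ^ d * (η * (l * ((2 * ⌈R / ε⌉₊ + 1 : ℕ) : ℝ) ^ d)) := by
        rw [← Finset.mul_sum]
        gcongr
        exact hu _
    _ = (ε ^ d * ((2 * ⌈R / ε⌉₊ + 1 : ℕ) : ℝ) ^ d) * (η * l) := by ring
    _ ≤ _ := by
        gcongr
        exact scaled_card_le hR hε hε1

lemma exists_support_radius {d : ℕ} {ψ : (Fin d → ℝ) → ℝ} (hs : HasCompactSupport ψ) :
    ∃ R : ℝ, 0 ≤ R ∧ ∀ y, ψ y ≠ 0 → ∀ i, |y i| ≤ R := by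
  obtain ⟨R, hR⟩ := hs.isCompact.isBounded.subset_closedBall 0
  refine ⟨max R 0, le_max_right _ _, fun y hy i => ?_⟩
  have h := hR (subset_tsupport _ hy)
  rw [mem_closedBall_zero_iff] at h
  exact (norm_le_pi_norm y i).trans (h.trans (le_max_left _ _))

lemma summable_scaled {d : ℕ} {ψ : (Fin d → ℝ) → ℝ} (hs : HasCompactSupport ψ) {ε : ℝ}
    (hε : 0 < ε) (u : (Fin d → ℤ) → ℝ) :
    Summable fun x : Fin d → ℤ => ψ (fun i => ε * (x i : ℝ)) * u x := by
  obtain ⟨R, hR, h⟩ := exists_support_radius hs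
  refine summable_of_ne_finset_zero (s := cube 0 ⌈R / ε⌉₊) ?_
  exact support_subset_cube hε fun x hx => h _ (left_ne_zero_of_mul hx)

lemma scaledSum_add {d : ℕ} {ψ : (Fin d → ℝ) → ℝ} (hs : HasCompactSupport ψ) {ε : ℝ}
    (hε : 0 < ε) (u v : (Fin d → ℤ) → ℝ) :
    scaledSum ψ ε (fun x => u x + v x) = scaledSum ψ ε u + scaledSum ψ ε v := by
  simp only [scaledSum, mul_add (ψ _)]
  rw [(summable_scaled hs hε u).tsum_add (summable_scaled hs hε v), mul_add]

lemma scaledSum_const_mul {d : ℕ} (ψ : (Fin d → ℝ) → ℝ) (ε c : ℝ) (u : (Fin d → ℤ) → ℝ) :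
    scaledSum ψ ε (fun x => c * u x) = c * scaledSum ψ ε u := by
  simp only [scaledSum, mul_left_comm (ψ _) c]
  rw [tsum_mul_left]
  ring

/-- Bound of the rescaled sums by the maximal function, uniformly in the scale. -/
lemma exists_scaledSum_bound {d : ℕ} {ψ : (Fin d → ℝ) → ℝ} (hc : Continuous ψ)
    (hs : HasCompactSupport ψ) :
    ∃ C : ℝ, 0 ≤ C ∧ ∀ ε, 0 < ε → ε ≤ 1 → ∀ l, 0 ≤ l → ∀ u : (Fin d → ℤ) → ℝ,
      (∀ n : ℕ, ∑ x ∈ cube 0 n, |u x| ≤ l * ((2 * n + 1 : ℕ) : ℝ) ^ d) →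
      |scaledSum ψ ε u| ≤ C * l := by
  obtain ⟨R, hR, hsupp⟩ := exists_support_radius hs
  obtain ⟨B, hB⟩ := hc.bounded_above_of_compact_support hs
  have hB0 : 0 ≤ B := (norm_nonneg _).trans (hB 0)
  refine ⟨(2 * R + 3) ^ d * B, by positivity, fun ε hε hε1 l hl u hu => ?_⟩
  rw [mul_assoc]
  refine abs_scaled_tsum_le hR hε hε1 hB0 hl
    (fun x hx => hsupp _ (left_ne_zero_of_mul hx)) (fun x => ?_) hu
  rw [abs_mul]
  gcongr
  exact hB _

lemma sum_const_cube {d : ℕ} (c : ℝ) (hc : 0 ≤ c) (n : ℕ) :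
    ∑ _x ∈ cube (0 : Fin d → ℤ) n, |c| ≤ c * ((2 * n + 1 : ℕ) : ℝ) ^ d := by
  rw [Finset.sum_const, card_cube, nsmul_eq_mul, abs_of_nonneg hc]
  push_cast
  rw [mul_comm]

lemma uniform_modulus {d : ℕ} {ψ : (Fin d → ℝ) → ℝ} (hc : Continuous ψ)
    (hs : HasCompactSupport ψ) {η : ℝ} (hη : 0 < η) :
    ∃ δ > 0, ∀ y z : Fin d → ℝ, (∀ i, |y i - z i| < δ) → |ψ y - ψ z| ≤ η := by
  obtain ⟨δ, hδ, h⟩ := Metric.uniformContinuous_iff.1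
    (HasCompactSupport.uniformContinuous_of_continuous hs hc) η hη
  refine ⟨δ, hδ, fun y z hyz => ?_⟩
  have := h (a := y) (b := z) ((dist_pi_lt_iff hδ).2 fun i => by
    rw [Real.dist_eq]
    exact hyz i)
  rw [Real.dist_eq] at this
  exact this.le

/-- Rescaled sums of bounded coboundaries vanish in the limit: summation by parts moves the shift
onto `ψ`, which is uniformly continuous. -/
lemma tendsto_scaledSum_coboundary {d : ℕ} {ψ : (Fin d → ℝ) → ℝ} (hc : Continuous ψ)
    (hs : HasCompactSupport ψ) {u : (Fin d → ℤ) → ℝ} {B : ℝ} (hu : ∀ x, |u x| ≤ B)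
    (g : Fin d → ℤ) :
    Tendsto (fun ε => scaledSum ψ ε (fun x => u x - u (x + g)))
      (nhdsWithin 0 (Set.Ioi 0)) (nhds 0) := by
  obtain ⟨R, hR, hsupp⟩ := exists_support_radius hs
  have hB0 : 0 ≤ B := (abs_nonneg _).trans (hu 0)
  set G : ℝ := ∑ i, |(g i : ℝ)| with hG
  have hG0 : 0 ≤ G := Finset.sum_nonneg fun i _ => abs_nonneg _
  have hgG : ∀ i, |(g i : ℝ)| ≤ G := fun i =>
    Finset.single_le_sum (f := fun i => |(g i : ℝ)|) (fun i _ => abs_nonneg _) (Finset.mem_univ i)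
  rw [Metric.tendsto_nhds]
  intro ρ hρ
  set C := (2 * (R + G) + 3) ^ d * B + 1 with hC
  have hC0 : 0 < C := by positivity
  obtain ⟨δ, hδ, hmod⟩ := uniform_modulus hc hs (η := ρ / (2 * C)) (by positivity)
  have hδ' : 0 < δ / (G + 1) := by positivity
  filter_upwards [Ioo_mem_nhdsGT (lt_min one_pos hδ')] with ε ⟨hε, hεlt⟩
  have hε1 : ε ≤ 1 := (hεlt.le.trans (min_le_left _ _))
  have hεδ : ε * G < δ := by
    have h1 : ε < δ / (G + 1) := hεlt.trans_le (min_le_right _ _)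
    rw [lt_div_iff₀ (by positivity)] at h1
    nlinarith
  have hεg : ∀ i, |ε * (g i : ℝ)| ≤ ε * G := fun i => by
    rw [abs_mul, abs_of_pos hε]
    gcongr
    exact hgG i
  have hparts : scaledSum ψ ε (fun x => u x - u (x + g)) = ε ^ d * ∑' x : Fin d → ℤ,
      (ψ (fun i => ε * (x i : ℝ)) - ψ (fun i => ε * ((x - g) i : ℤ))) * u x := by
    have s1 := summable_scaled hs hε u
    have s2 := summable_scaled hs hε (fun x => u (x + g))
    have e2 : (fun x : Fin d → ℤ => ψ (fun i => ε * ((x - g) i : ℤ)) * u x) ∘ (Equiv.addRight g) =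
        fun x : Fin d → ℤ => ψ (fun i => ε * (x i : ℝ)) * u (x + g) := by
      funext x
      simp
    have s3 : Summable (fun x : Fin d → ℤ => ψ (fun i => ε * ((x - g) i : ℤ)) * u x) := by
      rw [← (Equiv.addRight g).summable_iff, e2]
      exact s2
    have e3 := (Equiv.addRight g).tsum_eq
      (fun x : Fin d → ℤ => ψ (fun i => ε * ((x - g) i : ℤ)) * u x)
    have e4 : ∑' x : Fin d → ℤ, ψ (fun i => ε * (x i : ℝ)) * u (x + g) =
        ∑' x : Fin d → ℤ, ψ (fun i => ε * ((x - g) i : ℤ)) * u x := by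
      rw [← e3]
      exact tsum_congr fun x => (congrFun e2 x).symm
    simp only [scaledSum, mul_sub (ψ _), sub_mul]
    rw [s1.tsum_sub s2, s1.tsum_sub s3, e4]
  rw [dist_zero_right, Real.norm_eq_abs, hparts]
  have hbound := abs_scaled_tsum_le (d := d) (R := R + G) (ε := ε) (η := ρ / (2 * C)) (l := B)
    (D := fun x => (ψ (fun i => ε * (x i : ℝ)) - ψ (fun i => ε * ((x - g) i : ℤ))) * u x)
    (u := fun _ => B) (by positivity) hε hε1 (by positivity) hB0 ?_ ?_
    (sum_const_cube B hB0)
  · refine hbound.trans_lt ?_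
    have : (2 * (R + G) + 3) ^ d * (ρ / (2 * C) * B) =
        ρ / 2 * (((2 * (R + G) + 3) ^ d * B) / C) := by
      field_simp
    rw [this]
    have h1 : ((2 * (R + G) + 3) ^ d * B) / C ≤ 1 := by
      rw [div_le_one hC0]
      linarith
    nlinarith
  · intro x hx i
    have hne := left_ne_zero_of_mul hx
    by_cases h0 : ψ (fun i => ε * (x i : ℝ)) = 0
    · have h1 : ψ (fun i => ε * ((x - g) i : ℤ)) ≠ 0 := by
        intro h
        exact hne (by rw [h0, h, sub_zero])
      have h2 := abs_le.1 (hsupp _ h1 i)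
      have h3 := abs_le.1 (hεg i)
      have h4 : ε * G ≤ G := by nlinarith
      simp only [Pi.sub_apply, Int.cast_sub] at h2
      rw [abs_le]
      constructor <;> linarith [h2.1, h2.2, h3.1, h3.2]
    · exact (hsupp _ h0 i).trans (by linarith)
  · intro x
    rw [abs_mul, abs_of_nonneg hB0]
    gcongr
    · refine hmod _ _ fun i => ?_
      have : ε * (x i : ℝ) - ε * ((x - g) i : ℤ) = ε * (g i : ℝ) := by
        simp only [Pi.sub_apply, Int.cast_sub]
        ring
      rw [this]
      exact (hεg i).trans_lt hεδ
    · exact hu x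

/-- The half-open unit cube of the partition of `ℝ^d` with lower corner `x`. -/
def unitCell {d : ℕ} (x : Fin d → ℤ) : Set (Fin d → ℝ) :=
  Set.univ.pi fun i => Set.Ico (x i : ℝ) (x i + 1)

lemma measurableSet_unitCell {d : ℕ} (x : Fin d → ℤ) : MeasurableSet (unitCell x) :=
  MeasurableSet.univ_pi fun _ => measurableSet_Ico

lemma mem_unitCell {d : ℕ} {x : Fin d → ℤ} {y : Fin d → ℝ} :
    y ∈ unitCell x ↔ ∀ i, ⌊y i⌋ = x i := by
  simp [unitCell, Set.mem_pi, Int.floor_eq_iff]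

lemma volume_unitCell {d : ℕ} (x : Fin d → ℤ) : volume (unitCell x) = 1 := by
  simp [unitCell, volume_pi_pi]

/-- Riemann sums of a continuous compactly supported function along real mesh sizes. -/
lemma tendsto_scaledSum_one {d : ℕ} {ψ : (Fin d → ℝ) → ℝ} (hc : Continuous ψ)
    (hs : HasCompactSupport ψ) :
    Tendsto (fun ε => scaledSum ψ ε (fun _ => 1)) (nhdsWithin 0 (Set.Ioi 0))
      (nhds (∫ y, ψ y)) := by
  obtain ⟨R, hR, hsupp⟩ := exists_support_radius hs
  rw [Metric.tendsto_nhds]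
  intro ρ hρ
  set C : ℝ := (2 * (R + 1) + 3) ^ d with hC
  have hC0 : 0 < C := by positivity
  obtain ⟨δ, hδ, hmod⟩ := uniform_modulus hc hs (η := ρ / (2 * C)) (by positivity)
  filter_upwards [Ioo_mem_nhdsGT (lt_min one_pos hδ)] with ε ⟨hε, hεlt⟩
  have hε1 : ε ≤ 1 := (hεlt.le.trans (min_le_left _ _))
  have hεδ : ε < δ := hεlt.trans_le (min_le_right _ _)
  have hdist : ∀ (x : Fin d → ℤ) (y : Fin d → ℝ), y ∈ unitCell x → ∀ i,
      |ε * (x i : ℝ) - (ε • y) i| ≤ ε := by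
    intro x y hy i
    have h := hy i (Set.mem_univ i)
    rw [Pi.smul_apply, smul_eq_mul, ← mul_sub, abs_mul, abs_of_pos hε]
    have : |(x i : ℝ) - y i| ≤ 1 := by
      rw [abs_le]
      constructor <;> linarith [h.1, h.2]
    nlinarith
  have hψε : Integrable (fun y : Fin d → ℝ => ψ (ε • y)) :=
    (hc.integrable_of_hasCompactSupport hs).comp_smul hε.ne'
  have hUn : (⋃ x : Fin d → ℤ, unitCell x) = Set.univ := by
    refine Set.eq_univ_of_forall fun y => Set.mem_iUnion.2 ⟨fun i => ⌊y i⌋, ?_⟩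
    exact mem_unitCell.2 fun i => rfl
  have hdisj : Pairwise (Function.onFun Disjoint (unitCell : (Fin d → ℤ) → Set (Fin d → ℝ))) := by
    intro a b hab
    refine Set.disjoint_left.2 fun y ha hb => hab ?_
    funext i
    rw [← mem_unitCell.1 ha i, mem_unitCell.1 hb i]
  have hsum := hasSum_integral_iUnion (μ := volume) measurableSet_unitCell hdisj
    (f := fun y : Fin d → ℝ => ψ (ε • y)) hψε.integrableOn
  rw [hUn, setIntegral_univ] at hsum
  have hscale : ∫ y, ψ y = ε ^ d * ∫ y : Fin d → ℝ, ψ (ε • y) := by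
    rw [Measure.integral_comp_smul, Module.finrank_fin_fun, smul_eq_mul, abs_of_pos (by positivity)]
    field_simp
  have hdiff : scaledSum ψ ε (fun _ => 1) - ∫ y, ψ y = ε ^ d * ∑' x : Fin d → ℤ,
      (ψ (fun i => ε * (x i : ℝ)) * 1 - ∫ y in unitCell x, ψ (ε • y)) := by
    rw [(summable_scaled hs hε fun _ => 1).tsum_sub hsum.summable, hsum.tsum_eq, mul_sub, hscale,
      scaledSum]
  have hcell : ∀ x : Fin d → ℤ, ψ (fun i => ε * (x i : ℝ)) * 1 - ∫ y in unitCell x, ψ (ε • y) =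
      ∫ y in unitCell x, (ψ (fun i => ε * (x i : ℝ)) - ψ (ε • y)) := by
    intro x
    rw [integral_sub _ hψε.integrableOn]
    · simp [measureReal_def, volume_unitCell]
    · exact integrableOn_const (by simp [volume_unitCell])
  rw [Real.dist_eq, hdiff]
  have hbound := abs_scaled_tsum_le (d := d) (R := R + 1) (ε := ε) (η := ρ / (2 * C)) (l := 1)
    (D := fun x => ψ (fun i => ε * (x i : ℝ)) * 1 - ∫ y in unitCell x, ψ (ε • y))
    (u := fun _ => 1) (by positivity) hε hε1 (by positivity) zero_le_one ?_ ?_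
    (sum_const_cube 1 zero_le_one)
  · refine hbound.trans_lt ?_
    have : (2 * (R + 1) + 3) ^ d * (ρ / (2 * C) * 1) = ρ / 2 := by
      rw [← hC]
      field_simp
    rw [this]
    linarith
  · intro x hx i
    by_contra hcon
    push Not at hcon
    refine hx ?_
    rw [hcell x]
    refine setIntegral_eq_zero_of_forall_eq_zero fun y hy => ?_
    have h1 : ψ (fun i => ε * (x i : ℝ)) = 0 := by
      by_contra h
      linarith [hsupp _ h i]
    have h2 : ψ (ε • y) = 0 := by
      by_contra h
      have h3 := hsupp _ h i
      have h4 := hdist x y hy i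
      have h5 := abs_sub_abs_le_abs_sub (ε * (x i : ℝ)) ((ε • y) i)
      linarith
    rw [h1, h2, sub_zero]
  · intro x
    rw [hcell x]
    have := norm_setIntegral_le_of_norm_le_const (μ := volume) (s := unitCell x)
      (C := ρ / (2 * C)) (f := fun y => ψ (fun i => ε * (x i : ℝ)) - ψ (ε • y))
      (by simp [volume_unitCell])
      (fun y hy => hmod _ _ fun i => (hdist x y hy i).trans_lt hεδ)
    simpa [measureReal_def, volume_unitCell] using this

/-! ### Functions satisfying the pointwise ergodic theorem -/

/-- `h` satisfies the pointwise ergodic theorem: almost surely the rescaled sums along the orbit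
converge to `(∫ ψ) E[h]`, simultaneously for all continuous compactly supported `ψ`. -/
def Good {d : ℕ} {Ω : Type*} [MeasurableSpace Ω] (P : Measure Ω) (θ : (Fin d → ℤ) → Ω → Ω)
    (h : Ω → ℝ) : Prop :=
  ∀ᵐ ω ∂P, ∀ ψ : (Fin d → ℝ) → ℝ, Continuous ψ → HasCompactSupport ψ →
    Tendsto (fun ε => scaledSum ψ ε (fun x => h (θ x ω))) (nhdsWithin 0 (Set.Ioi 0))
      (nhds ((∫ y, ψ y) * ∫ ω', h ω' ∂P))

section

variable {d : ℕ} {Ω : Type*} [MeasurableSpace Ω] {P : Measure Ω} {θ : (Fin d → ℤ) → Ω → Ω}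

lemma Good.congr (hmp : ∀ g, MeasurePreserving (θ g) P P) {h h' : Ω → ℝ} (hg : Good P θ h)
    (hh : h =ᵐ[P] h') : Good P θ h' := by
  have hall : ∀ᵐ ω ∂P, ∀ x, h (θ x ω) = h' (θ x ω) :=
    ae_all_iff.2 fun x => (hmp x).quasiMeasurePreserving.ae hh
  unfold Good at hg ⊢
  rw [← integral_congr_ae hh]
  filter_upwards [hg, hall] with ω h1 h2 ψ hc hs
  simpa only [h2] using h1 ψ hc hs

lemma Good.add {h h' : Ω → ℝ} (hg : Good P θ h) (hg' : Good P θ h') (hi : Integrable h P)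
    (hi' : Integrable h' P) : Good P θ (fun ω => h ω + h' ω) := by
  unfold Good at hg hg' ⊢
  rw [integral_add hi hi']
  filter_upwards [hg, hg'] with ω h1 h2 ψ hc hs
  rw [mul_add]
  refine ((h1 ψ hc hs).add (h2 ψ hc hs)).congr' ?_
  filter_upwards [self_mem_nhdsWithin] with ε hε
  exact (scaledSum_add hs hε _ _).symm

lemma Good.const_mul {h : Ω → ℝ} (hg : Good P θ h) (c : ℝ) : Good P θ (fun ω => c * h ω) := by
  unfold Good at hg ⊢
  rw [integral_const_mul]
  filter_upwards [hg] with ω h1 ψ hc hs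
  simp only [scaledSum_const_mul]
  rw [mul_left_comm]
  exact (h1 ψ hc hs).const_mul c

lemma good_const [IsProbabilityMeasure P] (c : ℝ) : Good P θ (fun _ => c) := by
  have h1 : Good P θ (fun _ => (1 : ℝ)) := by
    refine Eventually.of_forall fun ω ψ hc hs => ?_
    simpa using tendsto_scaledSum_one hc hs
  simpa using h1.const_mul c

lemma integral_comp_eq (hmp : ∀ g, MeasurePreserving (θ g) P P) {u : Ω → ℝ} (hu : Measurable u)
    (g : Fin d → ℤ) : ∫ ω, u (θ g ω) ∂P = ∫ ω, u ω ∂P := by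
  have := integral_map (μ := P) (hmp g).measurable.aemeasurable (f := u) hu.aestronglyMeasurable
  rw [(hmp g).map_eq] at this
  exact this.symm

lemma good_bounded_coboundary [IsProbabilityMeasure P] (hmp : ∀ g, MeasurePreserving (θ g) P P)
    (hcomp : ∀ g g', θ g ∘ θ g' = θ (g + g')) {b : Ω → ℝ} (hb : Measurable b) {B : ℝ}
    (hB : ∀ ω, |b ω| ≤ B) (g : Fin d → ℤ) : Good P θ (fun ω => b ω - b (θ g ω)) := by
  have hbi : Integrable b P :=
    Integrable.of_bound hb.aestronglyMeasurable B (Eventually.of_forall hB)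
  have hbi' : Integrable (fun ω => b (θ g ω)) P := (hmp g).integrable_comp_of_integrable hbi
  refine Eventually.of_forall fun ω ψ hc hs => ?_
  rw [integral_sub hbi hbi', integral_comp_eq hmp hb, sub_self, mul_zero]
  have := tendsto_scaledSum_coboundary hc hs (u := fun x => b (θ x ω)) (fun x => hB _) g
  refine this.congr fun ε => ?_
  congr 1
  funext x
  have : θ g (θ x ω) = θ (x + g) ω := by
    rw [add_comm, ← hcomp]
    rfl
  simp only [this]

/-- Banach principle: by the maximal inequality and the Borel–Cantelli lemma, the functions
satisfying the pointwise ergodic theorem are closed in `L¹`. -/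
lemma good_of_approx [IsProbabilityMeasure P] (hmp : ∀ g, MeasurePreserving (θ g) P P)
    (hcomp : ∀ g g', θ g ∘ θ g' = θ (g + g')) {h : Ω → ℝ} (hh : Measurable h)
    (hhi : Integrable h P)
    (happ : ∀ δ > 0, ∃ g : Ω → ℝ, Measurable g ∧ Integrable g P ∧ Good P θ g ∧
      ∫ ω, |h ω - g ω| ∂P ≤ δ) : Good P θ h := by
  have h4 : ∀ n : ℕ, (0 : ℝ) < (1 / 4) ^ n := fun n => by positivity
  choose g hgm hgi hgg hgd using fun n : ℕ => happ ((1 / 4) ^ n) (h4 n)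
  have hmeas : ∀ n, P (exceed θ (fun ω => h ω - g n ω) ((1 / 2) ^ n)) ≤
      ENNReal.ofReal (10 ^ d * (1 / 2) ^ n) := by
    intro n
    have h2 : (0 : ℝ) < (1 / 2) ^ n := by positivity
    have hw := measureReal_exceed_le P θ hmp hcomp (hh.sub (hgm n)) (hhi.sub (hgi n)) h2
    rw [← ofReal_measureReal]
    refine ENNReal.ofReal_le_ofReal ?_
    refine le_of_mul_le_mul_left ?_ h2
    refine hw.trans ?_
    calc (10 : ℝ) ^ d * ∫ ω, |h ω - g n ω| ∂P ≤ 10 ^ d * (1 / 4) ^ n := by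
          gcongr
          exact hgd n
      _ = (1 / 2) ^ n * (10 ^ d * (1 / 2) ^ n) := by
          rw [show (1 / 4 : ℝ) = 1 / 2 * (1 / 2) by norm_num, mul_pow]
          ring
  have hsum : ∑' n, P (exceed θ (fun ω => h ω - g n ω) ((1 / 2) ^ n)) ≠ ⊤ := by
    refine ne_top_of_le_ne_top ?_ (ENNReal.tsum_le_tsum hmeas)
    rw [← ENNReal.ofReal_tsum_of_nonneg (fun n => by positivity)]
    · exact ENNReal.ofReal_ne_top
    · exact (summable_geometric_of_lt_one (by norm_num) (by norm_num)).mul_left _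
  filter_upwards [ae_eventually_notMem hsum, ae_all_iff.2 hgg] with ω hω hgω ψ hc hs
  obtain ⟨C, hC, hbound⟩ := exists_scaledSum_bound hc hs
  set I : ℝ := ∫ y, ψ y with hI
  rw [Metric.tendsto_nhds]
  intro ρ hρ
  have hlim : Tendsto (fun n : ℕ => (C + |I|) * (1 / 2 : ℝ) ^ n) atTop (nhds 0) := by
    simpa using (tendsto_pow_atTop_nhds_zero_of_lt_one (r := (1 / 2 : ℝ)) (by norm_num)
      (by norm_num)).const_mul (C + |I|)
  obtain ⟨n, hn, hnρ⟩ := (hω.and (hlim.eventually (gt_mem_nhds (half_pos hρ)))).exists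
  have hpow : (1 / 4 : ℝ) ^ n ≤ (1 / 2) ^ n :=
    pow_le_pow_left₀ (by norm_num) (by norm_num) n
  have havg : ∀ k : ℕ, ∑ x ∈ cube 0 k, |h (θ x ω) - g n (θ x ω)| ≤
      (1 / 2) ^ n * ((2 * k + 1 : ℕ) : ℝ) ^ d := by
    intro k
    by_contra hcon
    exact hn ⟨k, not_le.1 hcon⟩
  have hmean : |∫ ω, g n ω ∂P - ∫ ω, h ω ∂P| ≤ (1 / 2) ^ n := by
    rw [abs_sub_comm, ← integral_sub hhi (hgi n)]
    exact (abs_integral_le_integral_abs).trans ((hgd n).trans hpow)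
  filter_upwards [(Metric.tendsto_nhds.1 (hgω n ψ hc hs)) (ρ / 2) (half_pos hρ),
    Ioo_mem_nhdsGT one_pos] with ε hε ⟨hε0, hε1⟩
  have hdec : scaledSum ψ ε (fun x => h (θ x ω)) =
      scaledSum ψ ε (fun x => h (θ x ω) - g n (θ x ω)) + scaledSum ψ ε (fun x => g n (θ x ω)) := by
    rw [← scaledSum_add hs hε0]
    simp
  have hb := hbound ε hε0 hε1.le ((1 / 2) ^ n) (by positivity) _ havg
  rw [Real.dist_eq] at hε ⊢
  have hb2 : |I * (∫ ω, g n ω ∂P - ∫ ω, h ω ∂P)| ≤ |I| * (1 / 2) ^ n := by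
    rw [abs_mul]
    gcongr
  have hsplit : scaledSum ψ ε (fun x => h (θ x ω)) - I * ∫ ω, h ω ∂P =
      scaledSum ψ ε (fun x => h (θ x ω) - g n (θ x ω)) +
      (scaledSum ψ ε (fun x => g n (θ x ω)) - I * ∫ ω, g n ω ∂P) +
      I * (∫ ω, g n ω ∂P - ∫ ω, h ω ∂P) := by
    rw [hdec]
    ring
  rw [hsplit]
  refine (abs_add_three _ _ _).trans_lt ?_
  linarith

lemma exists_simple_approx {h : Ω → ℝ} (hhi : Integrable h P) {δ : ℝ} (hδ : 0 < δ) :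
    ∃ s : SimpleFunc Ω ℝ, Integrable s P ∧ ∫ ω, |h ω - s ω| ∂P ≤ δ := by
  obtain ⟨s, hs, hsm⟩ := (memLp_one_iff_integrable.2 hhi).exists_simpleFunc_eLpNorm_sub_lt
    ENNReal.one_ne_top (ε := ENNReal.ofReal δ) (by simpa using hδ)
  have hsi := memLp_one_iff_integrable.1 hsm
  refine ⟨s, hsi, ?_⟩
  have e := integral_norm_eq_lintegral_enorm (μ := P) (hhi.sub hsi).aestronglyMeasurable
  rw [← eLpNorm_one_eq_lintegral_enorm] at e
  have : ∫ ω, |h ω - s ω| ∂P = (eLpNorm (h - ⇑s) 1 P).toReal := e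
  rw [this]
  exact ENNReal.toReal_le_of_le_ofReal hδ.le hs.le

lemma good_coboundary [IsProbabilityMeasure P] (hmp : ∀ g, MeasurePreserving (θ g) P P)
    (hcomp : ∀ g g', θ g ∘ θ g' = θ (g + g')) {b : Ω → ℝ} (hb : Measurable b)
    (hbi : Integrable b P) (g : Fin d → ℤ) : Good P θ (fun ω => b ω - b (θ g ω)) := by
  have hbi' : Integrable (fun ω => b (θ g ω)) P := (hmp g).integrable_comp_of_integrable hbi
  refine good_of_approx hmp hcomp (hb.sub (hb.comp (hmp g).measurable)) (hbi.sub hbi') ?_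
  intro δ hδ
  obtain ⟨s, hsi, hs⟩ := exists_simple_approx hbi (half_pos hδ)
  have hsi' : Integrable (fun ω => s (θ g ω)) P := (hmp g).integrable_comp_of_integrable hsi
  obtain ⟨B, hB⟩ := s.exists_forall_norm_le
  refine ⟨fun ω => s ω - s (θ g ω), s.measurable.sub (s.measurable.comp (hmp g).measurable),
    hsi.sub hsi', good_bounded_coboundary hmp hcomp s.measurable hB g, ?_⟩
  have i1 : Integrable (fun ω => |b ω - s ω|) P := (hbi.sub hsi).abs
  have i2 : Integrable (fun ω => |b (θ g ω) - s (θ g ω)|) P := (hbi'.sub hsi').abs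
  calc ∫ ω, |b ω - b (θ g ω) - (s ω - s (θ g ω))| ∂P
      ≤ ∫ ω, (|b ω - s ω| + |b (θ g ω) - s (θ g ω)|) ∂P := by
        refine integral_mono ((hbi.sub hbi').sub (hsi.sub hsi')).abs (i1.add i2) fun ω => ?_
        dsimp only
        rw [show b ω - b (θ g ω) - (s ω - s (θ g ω)) =
          (b ω - s ω) - (b (θ g ω) - s (θ g ω)) by ring]
        exact abs_sub _ _
    _ = ∫ ω, |b ω - s ω| ∂P + ∫ ω, |b ω - s ω| ∂P := by
        rw [integral_add i1 i2,
          integral_comp_eq hmp (u := fun ω => |b ω - s ω|) (hb.sub s.measurable).abs g]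
    _ ≤ δ := by linarith

/-! ### Density of coboundaries and constants -/

/-- An almost invariant set agrees almost everywhere with the strictly invariant set of points
whose whole orbit it contains, so ergodicity makes it null or conull. -/
lemma ae_mem_or_ae_notMem (hmp : ∀ g, MeasurePreserving (θ g) P P)
    [IsProbabilityMeasure P] (hcomp : ∀ g g', θ g ∘ θ g' = θ (g + g'))
    (herg : ∀ A : Set Ω, MeasurableSet A → (∀ g, θ g ⁻¹' A = A) → P A = 0 ∨ P A = 1)
    {A : Set Ω} (hA : MeasurableSet A) (hinv : ∀ g, ∀ᵐ ω ∂P, θ g ω ∈ A ↔ ω ∈ A) :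
    (∀ᵐ ω ∂P, ω ∈ A) ∨ ∀ᵐ ω ∂P, ω ∉ A := by
  set A' : Set Ω := ⋂ g, θ g ⁻¹' A with hA'
  have hA'm : MeasurableSet A' := MeasurableSet.iInter fun g => (hmp g).measurable hA
  have hA'inv : ∀ g, θ g ⁻¹' A' = A' := by
    intro g
    ext ω
    simp only [hA', Set.mem_preimage, Set.mem_iInter]
    have hc : ∀ k, θ k (θ g ω) = θ (k + g) ω := fun k => congrFun (hcomp k g) ω
    simp only [hc]
    exact ⟨fun h k => by simpa using h (k - g), fun h k => h _⟩
  have hae : ∀ᵐ ω ∂P, ω ∈ A' ↔ ω ∈ A := by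
    filter_upwards [ae_all_iff.2 hinv] with ω hω
    simp only [hA', Set.mem_iInter, Set.mem_preimage, hω]
    simp
  rcases herg A' hA'm hA'inv with h0 | h1
  · right
    filter_upwards [hae, measure_eq_zero_iff_ae_notMem.1 h0] with ω h2 h3
    rwa [← h2]
  · left
    filter_upwards [hae, (mem_ae_iff_prob_eq_one hA'm).2 h1] with ω h2 h3
    exact h2.1 h3

lemma ae_const_of_invariant [IsProbabilityMeasure P] (hmp : ∀ g, MeasurePreserving (θ g) P P)
    (hcomp : ∀ g g', θ g ∘ θ g' = θ (g + g'))
    (herg : ∀ A : Set Ω, MeasurableSet A → (∀ g, θ g ⁻¹' A = A) → P A = 0 ∨ P A = 1)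
    {k : Ω → ℝ} (hk : Measurable k) (hinv : ∀ g, ∀ᵐ ω ∂P, k (θ g ω) = k ω) :
    ∃ c, k =ᵐ[P] fun _ => c := by
  refine exists_eventuallyEq_const_of_forall_separating MeasurableSet fun U hU => ?_
  refine ae_mem_or_ae_notMem hmp hcomp herg (A := k ⁻¹' U) (hk hU) fun g => ?_
  filter_upwards [hinv g] with ω hω
  simp [hω]

lemma integrable_L2 [IsProbabilityMeasure P] (u : Lp ℝ 2 P) : Integrable u P :=
  (Lp.memLp u).integrable (by norm_num)

/-- The subspace of `L²` of functions satisfying the pointwise ergodic theorem. -/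
def goodSubmodule [IsProbabilityMeasure P] (hmp : ∀ g, MeasurePreserving (θ g) P P) :
    Submodule ℝ (Lp ℝ 2 P) where
  carrier := {u | Good P θ u}
  zero_mem' := (good_const (P := P) (θ := θ) 0).congr hmp (Lp.coeFn_zero ℝ 2 P).symm
  add_mem' := fun {u v} hu hv =>
    (Good.add hu hv (integrable_L2 u) (integrable_L2 v)).congr hmp (Lp.coeFn_add u v).symm
  smul_mem' := fun c u hu => (Good.const_mul hu c).congr hmp (Lp.coeFn_smul c u).symm

lemma isClosed_goodSubmodule [IsProbabilityMeasure P] (hmp : ∀ g, MeasurePreserving (θ g) P P)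
    (hcomp : ∀ g g', θ g ∘ θ g' = θ (g + g')) :
    IsClosed (goodSubmodule hmp : Set (Lp ℝ 2 P)) := by
  refine isClosed_of_closure_subset fun u hu => ?_
  refine good_of_approx hmp hcomp (Lp.stronglyMeasurable u).measurable (integrable_L2 u) ?_
  intro δ hδ
  obtain ⟨v, hv, huv⟩ := Metric.mem_closure_iff.1 hu δ hδ
  refine ⟨v, (Lp.stronglyMeasurable v).measurable, integrable_L2 v, hv, ?_⟩
  have hsub := (Lp.memLp u).sub (Lp.memLp v)
  have e := integral_norm_eq_lintegral_enorm (μ := P) hsub.aestronglyMeasurable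
  rw [← eLpNorm_one_eq_lintegral_enorm] at e
  rw [Lp.dist_def] at huv
  have h1 : ∫ ω, |u ω - v ω| ∂P = (eLpNorm (⇑u - ⇑v) 1 P).toReal := e
  rw [h1]
  refine le_trans ?_ huv.le
  exact ENNReal.toReal_mono hsub.eLpNorm_ne_top
    (eLpNorm_le_eLpNorm_of_exponent_le (by norm_num) hsub.aestronglyMeasurable)

/-- A function orthogonal to all coboundaries is invariant, hence constant by ergodicity; being
constant it satisfies the theorem itself, so the orthogonal complement is trivial. -/
lemma goodSubmodule_eq_top [IsProbabilityMeasure P] (hmp : ∀ g, MeasurePreserving (θ g) P P)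
    (hcomp : ∀ g g', θ g ∘ θ g' = θ (g + g'))
    (herg : ∀ A : Set Ω, MeasurableSet A → (∀ g, θ g ⁻¹' A = A) → P A = 0 ∨ P A = 1) :
    goodSubmodule hmp = ⊤ := by
  have hcl := isClosed_goodSubmodule hmp hcomp
  have : CompleteSpace (goodSubmodule hmp) := hcl.completeSpace_coe
  rw [← Submodule.orthogonal_eq_bot_iff, Submodule.eq_bot_iff]
  intro k hk
  have hinv : ∀ g, ∀ᵐ ω ∂P, k (θ g ω) = k ω := by
    intro g
    set Uk := Lp.compMeasurePreserving (θ g) (hmp g) k with hUk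
    have hcoe : (Uk : Ω → ℝ) =ᵐ[P] k ∘ θ g := Lp.coeFn_compMeasurePreserving k (hmp g)
    have hmem : k - Uk ∈ goodSubmodule hmp := by
      refine (good_coboundary hmp hcomp (Lp.stronglyMeasurable k).measurable (integrable_L2 k)
        g).congr hmp ?_
      filter_upwards [hcoe, Lp.coeFn_sub k Uk] with ω h1 h2
      rw [h2, Pi.sub_apply, h1]
      rfl
    have horth : inner ℝ (k - Uk) k = 0 := Submodule.inner_right_of_mem_orthogonal hmem hk
    have hnorm : ‖Uk‖ = ‖k‖ := Lp.norm_compMeasurePreserving k (hmp g)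
    -- `‖k - Uk‖² = ‖k‖² - 2⟪k, Uk⟫ + ‖Uk‖² = 2⟪k - Uk, k⟫ = 0`
    have hzero : ‖k - Uk‖ ^ 2 = 0 := by
      rw [inner_sub_left, real_inner_self_eq_norm_sq, real_inner_comm] at horth
      rw [norm_sub_sq_real, hnorm]
      linarith
    have heq : k = Uk := by
      rw [← sub_eq_zero, ← norm_eq_zero]
      exact pow_eq_zero_iff (two_ne_zero) |>.1 hzero
    rw [← heq] at hcoe
    filter_upwards [hcoe] with ω hω
    exact hω.symm
  obtain ⟨c, hc⟩ := ae_const_of_invariant hmp hcomp herg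
    (Lp.stronglyMeasurable k).measurable hinv
  have hkmem : k ∈ goodSubmodule hmp := (good_const c).congr hmp hc.symm
  exact inner_self_eq_zero.1 (Submodule.inner_right_of_mem_orthogonal hkmem hk)

/-- Multiparameter pointwise ergodic theorem. -/
lemma good_of_integrable [IsProbabilityMeasure P] (hmp : ∀ g, MeasurePreserving (θ g) P P)
    (hcomp : ∀ g g', θ g ∘ θ g' = θ (g + g'))
    (herg : ∀ A : Set Ω, MeasurableSet A → (∀ g, θ g ⁻¹' A = A) → P A = 0 ∨ P A = 1)
    {h : Ω → ℝ} (hh : Measurable h) (hhi : Integrable h P) : Good P θ h := by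
  refine good_of_approx hmp hcomp hh hhi fun δ hδ => ?_
  obtain ⟨s, hsi, hs⟩ := exists_simple_approx hhi hδ
  refine ⟨s, s.measurable, hsi, ?_, hs⟩
  have hs2 : MemLp s 2 P := s.memLp_of_isFiniteMeasure 2 P
  have hmem : hs2.toLp s ∈ goodSubmodule hmp := by
    rw [goodSubmodule_eq_top hmp hcomp herg]
    trivial
  exact Good.congr hmp hmem hs2.coeFn_toLp

end

end PalmErgodic

/-- Ergodicity of Palm averages, special discrete case (`𝔾 = ℤ^d`, points in `ℤ^d`):
for an ergodic ℤ^d-action `θ` on `(Ω, P)` carrying a covariant point process `ω ↦ ω̂ ⊆ ℤ^d`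
of positive intensity `m = P(0 ∈ ω̂)`, and any `f` integrable on `{0 ∈ ω̂}`, there is a
translation-invariant full-measure set of `ω` along which
`ε^d Σ_{x∈ω̂} φ(εx) f(θ_x ω) → (∫φ) ∫_{{0∈ω̂}} f dP` for every `φ ∈ C_c(ℝ^d)`. -/
theorem stmt10 {d : ℕ} (hd : 1 ≤ d)
    {Ω : Type*} [MeasurableSpace Ω] (P : Measure Ω) [IsProbabilityMeasure P]
    (θ : (Fin d → ℤ) → Ω → Ω)
    (hmp : ∀ g, MeasurePreserving (θ g) P P)
    (hid : θ 0 = id)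
    (hcomp : ∀ g g', θ g ∘ θ g' = θ (g + g'))
    (herg : ∀ A : Set Ω, MeasurableSet A → (∀ g, θ g ⁻¹' A = A) → P A = 0 ∨ P A = 1)
    (hat : Ω → Set (Fin d → ℤ))
    (hhatmeas : ∀ x : Fin d → ℤ, MeasurableSet {ω | x ∈ hat ω})
    (hcov : ∀ᵐ ω ∂P, ∀ g : Fin d → ℤ, hat (θ g ω) = (fun x => x - g) '' hat ω)
    (hm : 0 < P {ω | (0 : Fin d → ℤ) ∈ hat ω})
    (f : Ω → ℝ) (hfmeas : Measurable f)
    (hfint : IntegrableOn f {ω | (0 : Fin d → ℤ) ∈ hat ω} P) :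
    ∃ A : Set Ω, MeasurableSet A ∧ P A = 1 ∧ (∀ g, θ g ⁻¹' A = A) ∧
      ∀ ω ∈ A, ∀ φ : EuclideanSpace ℝ (Fin d) → ℝ, Continuous φ → HasCompactSupport φ →
        Tendsto
          (fun ε : ℝ => ε ^ d * ∑' x : Fin d → ℤ,
            Set.indicator (hat ω)
              (fun x => φ ((WithLp.equiv 2 (Fin d → ℝ)).symm fun i => ε * (x i : ℝ)) *
                f (θ x ω)) x)
          (nhdsWithin 0 (Set.Ioi 0))
          (nhds ((∫ y, φ y) * ∫ ω' in {ω' | (0 : Fin d → ℤ) ∈ hat ω'}, f ω' ∂P)) := by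
  set h : Ω → ℝ := {ω | (0 : Fin d → ℤ) ∈ hat ω}.indicator f with hh
  have hhm : Measurable h := hfmeas.indicator (hhatmeas 0)
  have hhi : Integrable h P := hfint.integrable_indicator (hhatmeas 0)
  have hgood := PalmErgodic.good_of_integrable hmp hcomp herg hhm hhi
  have hint : ∫ ω, h ω ∂P = ∫ ω' in {ω' | (0 : Fin d → ℤ) ∈ hat ω'}, f ω' ∂P :=
    integral_indicator (hhatmeas 0)
  -- A measurable event of full measure on which both almost sure properties hold.
  obtain ⟨T, hTae, hTm, hT⟩ := (hgood.and hcov).exists_measurable_mem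
  refine ⟨⋂ g, θ g ⁻¹' T, MeasurableSet.iInter fun g => (hmp g).measurable hTm, ?_, ?_, ?_⟩
  · rw [← mem_ae_iff_prob_eq_one (MeasurableSet.iInter fun g => (hmp g).measurable hTm)]
    rw [countable_iInter_mem]
    exact fun g => (hmp g).quasiMeasurePreserving.ae hTae
  · intro g
    ext ω
    have hc : ∀ k, θ k (θ g ω) = θ (k + g) ω := fun k => congrFun (hcomp k g) ω
    simp only [Set.mem_preimage, Set.mem_iInter, hc]
    exact ⟨fun H k => by simpa using H (k - g), fun H k => H _⟩
  · intro ω hω φ hc hs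
    have hωT : ω ∈ T := by simpa [hid] using Set.mem_iInter.1 hω 0
    obtain ⟨hlim, hcovω⟩ := hT ω hωT
    have hψs : HasCompactSupport fun y : Fin d → ℝ => φ (WithLp.toLp 2 y) :=
      hs.comp_homeomorph (PiLp.continuousLinearEquiv 2 ℝ fun _ : Fin d => ℝ).symm.toHomeomorph
    have hψc : Continuous fun y : Fin d → ℝ => φ (WithLp.toLp 2 y) :=
      hc.comp (PiLp.continuous_toLp 2 _)
    have hψi : ∫ y : Fin d → ℝ, φ (WithLp.toLp 2 y) = ∫ y, φ y :=
      (PiLp.volume_preserving_toLp (Fin d)).integral_comp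
        (MeasurableEquiv.toLp 2 (Fin d → ℝ)).measurableEmbedding φ
    have hconv := hlim _ hψc hψs
    rw [hψi, hint] at hconv
    refine hconv.congr fun ε => ?_
    unfold PalmErgodic.scaledSum
    congr 1
    refine tsum_congr fun x => ?_
    have hx : (0 : Fin d → ℤ) ∈ hat (θ x ω) ↔ x ∈ hat ω := by
      rw [hcovω x]
      simp [sub_eq_zero]
    simp only [hh]
    by_cases hxω : x ∈ hat ω
    · rw [Set.indicator_of_mem hxω, Set.indicator_of_mem (by exact hx.2 hxω)]
      rfl
    · rw [Set.indicator_of_notMem hxω, Set.indicator_of_notMem (by exact mt hx.1 hxω),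
        mul_zero]
end
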